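/- Let G = G_{Y,ρ}(C,D) be a proximinal graph for an ultrametric space (Y,ρ). Then the following statements are equivalent: (1) G is connected; (2) diam(C ∪ D) ≤ dist(C,D); (3) G is a complete bipartite graph. -/

import Mathlib

open Set

/-- A semimetric on a set `X`: a symmetric, nonnegative distance function
vanishing exactly on the diagonal. -/
structure IsSemimetric {X : Type*} (d : X → X → ℝ) : Prop where
  nonneg : ∀ x y, 0 ≤ d x y
  symm : ∀ x y, d x y = d y x
  eq_zero_iff : ∀ x y, d x y = 0 ↔ x = y

/-- A metric: a semimetric satisfying the triangle inequality. -/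
def IsMetric {X : Type*} (d : X → X → ℝ) : Prop :=
  IsSemimetric d ∧ ∀ x y z, d x y ≤ d x z + d z y

/-- An ultrametric: a semimetric satisfying the strong triangle inequality
(which implies the triangle inequality). -/
def IsUltrametric {X : Type*} (d : X → X → ℝ) : Prop :=
  IsSemimetric d ∧ ∀ x y z, d x y ≤ max (d x z) (d z y)

/-- `dist(A,B) = inf {d a b : a ∈ A, b ∈ B}`. -/
noncomputable def SetDist {X : Type*} (d : X → X → ℝ) (A B : Set X) : ℝ :=
  sInf (Set.image2 d A B)

/-- `A` is proximinal in `(X,d)`: every point of `X` has a best approximation in `A`. -/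
def Proximinal {X : Type*} (d : X → X → ℝ) (A : Set X) : Prop :=
  ∀ x : X, ∃ a ∈ A, d x a = sInf ((d x) '' A)

/-- `G` is the proximinal graph `G_{X,d}(A,B)`: a bipartite graph with (nonempty,
disjoint, proximinal) parts `A` and `B`, whose vertex set is `A ∪ B` (all other
points of the ambient type are isolated and are not vertices of the graph), and in
which `a ∈ A` and `b ∈ B` are adjacent iff `d a b = dist(A,B)`. -/
structure ProximinalFor {X : Type*} (d : X → X → ℝ) (G : SimpleGraph X) (A B : Set X) : Prop where
  nonemptyA : A.Nonempty
  nonemptyB : B.Nonempty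
  disj : Disjoint A B
  proxA : Proximinal d A
  proxB : Proximinal d B
  edges_between : ∀ u v, G.Adj u v → (u ∈ A ∧ v ∈ B) ∨ (u ∈ B ∧ v ∈ A)
  adj_iff : ∀ a ∈ A, ∀ b ∈ B, (G.Adj a b ↔ d a b = SetDist d A B)

/-- `G` is a farthest graph for `(X,d)` with parts `A`, `B`: `a ∈ A` and `b ∈ B`
are adjacent iff `d a b = sup {d x y : x ∈ A, y ∈ B}`, i.e. iff `d a b` is an upper
bound of all the cross distances. -/
structure FarthestFor {X : Type*} (d : X → X → ℝ) (G : SimpleGraph X) (A B : Set X) : Prop where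
  nonemptyA : A.Nonempty
  nonemptyB : B.Nonempty
  disj : Disjoint A B
  edges_between : ∀ u v, G.Adj u v → (u ∈ A ∧ v ∈ B) ∨ (u ∈ B ∧ v ∈ A)
  adj_iff : ∀ a ∈ A, ∀ b ∈ B, (G.Adj a b ↔ ∀ x ∈ A, ∀ y ∈ B, d x y ≤ d a b)

/-!
The strong triangle inequality makes `d x y ≤ r` a transitive relation, so a path whose steps all
have length at most `r` has its endpoints within distance `r`. In a graph whose edges join the
pairs realising `dist(A, B)`, connectedness therefore bounds every distance by `dist(A, B)`; as no
cross distance is smaller, every cross pair then realises `dist(A, B)`, hence is an edge.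
-/

section Graph

variable {V : Type*} {G : SimpleGraph V} {A B : Set V}

theorem connected_induce_union_of_isCompleteBetween (h : G.IsCompleteBetween A B)
    (hA : A.Nonempty) (hB : B.Nonempty) : (G.induce (A ∪ B)).Connected := by
  obtain ⟨a₀, ha₀⟩ := hA
  obtain ⟨b₀, hb₀⟩ := hB
  have reachable_of_mem {a b : V} (ha : a ∈ A) (hb : b ∈ B) :
      (G.induce (A ∪ B)).Reachable ⟨a, Or.inl ha⟩ ⟨b, Or.inr hb⟩ :=
    SimpleGraph.Adj.reachable (h ha hb)
  refine (SimpleGraph.connected_iff_exists_forall_reachable _).2 ⟨⟨a₀, Or.inl ha₀⟩, ?_⟩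
  rintro ⟨x, hx | hx⟩
  · exact (reachable_of_mem ha₀ hb₀).trans (reachable_of_mem hx hb₀).symm
  · exact reachable_of_mem ha₀ hx

theorem rel_of_adj_of_isBipartiteWith {P : V → V → Prop} (hG : G.IsBipartiteWith A B)
    (hsymm : ∀ u v, P u v → P v u) (hP : ∀ a ∈ A, ∀ b ∈ B, G.Adj a b → P a b) {u v : V}
    (huv : G.Adj u v) : P u v := by
  rcases hG.mem_of_adj huv with ⟨hu, hv⟩ | ⟨hu, hv⟩
  · exact hP u hu v hv huv
  · exact hsymm v u (hP v hv u hu huv.symm)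

theorem rel_of_reachable {P : V → V → Prop} [Std.Refl P] [IsTrans V P]
    (hP : ∀ u v, G.Adj u v → P u v) {u v : V} (huv : G.Reachable u v) : P u v :=
  Relation.reflTransGen_le_of_le hP u v ((G.reachable_iff_reflTransGen u v).1 huv)

theorem pseudoMetric_le_of_reachable {R : Type*} [Zero R] [Add R] [SemilatticeSup R]
    (d : PseudoMetric V R) [d.IsUltra] {r : R} (hr : 0 ≤ r)
    (hd : ∀ u v, G.Adj u v → d u v ≤ r) {u v : V} (huv : G.Reachable u v) : d u v ≤ r :=
  have : Std.Refl fun x y ↦ d x y ≤ r := ⟨fun x ↦ (d.refl x).trans_le hr⟩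
  have : IsTrans V fun x y ↦ d x y ≤ r :=
    ⟨fun _ _ _ hxy hyz ↦ PseudoMetric.IsUltra.le_sup.trans (sup_le hxy hyz)⟩
  rel_of_reachable (P := fun x y ↦ d x y ≤ r) hd huv

end Graph

section SetDist

variable {X : Type*} {d : X → X → ℝ} {A B : Set X}

theorem setDist_nonneg (hd : ∀ x y, 0 ≤ d x y) : 0 ≤ SetDist d A B :=
  Real.sInf_nonneg (forall_mem_image2.2 fun a _ b _ ↦ hd a b)

theorem setDist_le (hd : ∀ x y, 0 ≤ d x y) {a b : X} (ha : a ∈ A) (hb : b ∈ B) :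
    SetDist d A B ≤ d a b :=
  csInf_le ⟨0, forall_mem_image2.2 fun x _ y _ ↦ hd x y⟩ (mem_image2_of_mem ha hb)

end SetDist

namespace IsUltrametric

variable {X : Type*} {d : X → X → ℝ}

/-- An ultrametric in the unbundled sense `IsUltrametric`, as a bundled Mathlib pseudometric. -/
def toPseudoMetric (hd : IsUltrametric d) : PseudoMetric X ℝ where
  toFun := d
  refl' x := (hd.1.eq_zero_iff x x).2 rfl
  symm' := hd.1.symm
  triangle' x y z :=
    (hd.2 x z y).trans (max_le_add_of_nonneg (hd.1.nonneg x y) (hd.1.nonneg y z))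

instance isUltra_toPseudoMetric (hd : IsUltrametric d) : hd.toPseudoMetric.IsUltra where
  le_sup' x y z := hd.2 x z y

end IsUltrametric

theorem stmt8_general {Y : Type*} (d : PseudoMetric Y ℝ) [d.IsUltra] {G : SimpleGraph Y}
    {A B : Set Y} (hG : G.IsBipartiteWith A B) (hA : A.Nonempty) (hB : B.Nonempty)
    (hadj : ∀ a ∈ A, ∀ b ∈ B, (G.Adj a b ↔ d a b = SetDist d A B)) :
    List.TFAE [
      (G.induce (A ∪ B)).Connected,
      ∀ x ∈ A ∪ B, ∀ y ∈ A ∪ B, d x y ≤ SetDist d A B,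
      G.IsCompleteBetween A B] := by
  tfae_have 1 → 2 := by
    intro hconn x hx y hy
    have edge_le (u v : Y) (huv : G.Adj u v) : d u v ≤ SetDist d A B :=
      rel_of_adj_of_isBipartiteWith hG (fun _ _ h ↦ (d.symm _ _).trans_le h)
        (fun a ha b hb hab ↦ ((hadj a ha b hb).1 hab).le) huv
    have reachable : G.Reachable x y :=
      (hconn.preconnected ⟨x, hx⟩ ⟨y, hy⟩).map (SimpleGraph.Embedding.induce (A ∪ B)).toHom
    exact pseudoMetric_le_of_reachable d (setDist_nonneg d.nonneg) edge_le reachable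
  tfae_have 2 → 3 := fun hdiam a ha b hb ↦ (hadj a ha b hb).2 <|
    (hdiam a (Or.inl ha) b (Or.inr hb)).antisymm (setDist_le d.nonneg ha hb)
  tfae_have 3 → 1 := fun h ↦ connected_induce_union_of_isCompleteBetween h hA hB
  tfae_finish

/-- Corollary 2.10: for a proximinal graph `G = G_{Y,ρ}(C,D)` over an ultrametric
space `(Y,ρ)`, the following are equivalent: (1) `G` is connected (as a graph with
vertex set `C ∪ D`); (2) `diam (C ∪ D) ≤ dist(C,D)`; (3) `G` is a complete
bipartite graph. -/
theorem stmt8 {Y : Type*} (ρ : Y → Y → ℝ) (hρ : IsUltrametric ρ)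
    (G : SimpleGraph Y) (C D : Set Y) (hG : ProximinalFor ρ G C D) :
    List.TFAE [
      (G.induce (C ∪ D)).Connected,
      ∀ x ∈ C ∪ D, ∀ y ∈ C ∪ D, ρ x y ≤ SetDist ρ C D,
      ∀ c ∈ C, ∀ e ∈ D, G.Adj c e] := by
  exact stmt8_general hρ.toPseudoMetric ⟨hG.disj, hG.edges_between⟩ hG.nonemptyA hG.nonemptyB
    hG.adj_iff
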